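/- Let V ∈ ℝ², let τ₁, τ₂ ∈ ℝ² be linearly independent unit vectors, and let ℓ₁, ℓ₂, ℓ₃, ℓ₄ > 0. Set V₁ = V + ℓ₁τ₁, V₂ = V + ℓ₂τ₂, V₃ = V − ℓ₃τ₁, V₄ = V − ℓ₄τ₂, and for i = 1,2,3,4 (indices mod 4) let K_i = convexHull{V, V_i, V_{i+1}} and let s_i(x) = e(β_i(x)) where β_i is the affine function with β_i(V) = 1, β_i(V_i) = β_i(V_{i+1}) = 0 and e(t) = (56t³ − 63t² + 18t − 1)/10. Suppose v₁, v₂, v₃, v₄ : ℝ² → ℝ² each have polynomial components of total degree at most 4, and for each i (mod 4) the maps v_i and v_{i+1} agree on the segment [V, V_{i+1}]. Then (1/(ℓ₁ℓ₂)) ∫_{K₁} s₁ div v₁ dx − (1/(ℓ₂ℓ₃)) ∫_{K₂} s₂ div v₂ dx + (1/(ℓ₃ℓ₄)) ∫_{K₃} s₃ div v₃ dx − (1/(ℓ₄ℓ₁)) ∫_{K₄} s₄ div v₄ dx = 0. -/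

import Mathlib

open MeasureTheory

/-- The pointwise divergence of a planar vector field, evaluated via Fréchet
derivatives of the two components. -/
noncomputable def pdiv (v : ℝ × ℝ → ℝ × ℝ) (x : ℝ × ℝ) : ℝ :=
  fderiv ℝ (fun y => (v y).1) x (1, 0) + fderiv ℝ (fun y => (v y).2) x (0, 1)

/-!
In collapsed coordinates `x = V + u (y - V)`, with `y` on the edge opposite to `V` and `u ∈ [0, 1]`,
the sting function is `e(1 - u)` and the area element is proportional to `u`. Because
`∫₀¹ u e(1 - u) uᵏ du` vanishes for `k = 1, 2, 3`, integrating a cubic against the sting function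
over a triangle only sees the value of the cubic at `V`. Hence `∫ sᵢ div vᵢ` is a multiple of
`div vᵢ (V)`, and dividing by `ℓᵢ ℓᵢ₊₁` makes the multiple the same for all four triangles.

Continuity across the edges makes the derivative of `v₁ - v₂ + v₃ - v₄` at `V` vanish along both
lines through `V`: the four terms cancel in pairs, and which pairs depends on the line. So this
derivative is zero, and with it the alternating sum of the divergences at `V`.
-/

section Polynomials

open AffineMap MvPolynomial

theorem totalDegree_pderiv_le {σ R : Type*} [CommSemiring R] (i : σ) (p : MvPolynomial σ R) :
    (pderiv i p).totalDegree ≤ p.totalDegree - 1 := by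
  refine Finset.sup_le fun m hm ↦ ?_
  rw [mem_support_iff, coeff_pderiv] at hm
  have hdeg := le_totalDegree (mem_support_iff.mpr (left_ne_zero_of_mul hm))
  rw [Finsupp.sum_add_index' (fun _ ↦ rfl) (fun _ _ _ ↦ rfl), Finsupp.sum_single_index rfl] at hdeg
  exact Nat.le_sub_one_of_lt hdeg

theorem exists_polynomial_eval_lineMap {σ R : Type*} [CommRing R] (p : MvPolynomial σ R)
    (x y : σ → R) :
    ∃ q : Polynomial R, q.natDegree ≤ p.totalDegree ∧ ∀ t, q.eval t = eval (lineMap x y t) p := by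
  refine ⟨aeval (fun i ↦ .C (y i - x i) * .X + .C (x i)) p, ?_, fun t ↦ ?_⟩
  · exact (aeval_natDegree_le p le_rfl _ fun _ ↦ Polynomial.natDegree_linear_le).trans_eq
      (mul_one _)
  · induction p using MvPolynomial.induction_on with
    | C a => simp
    | add p q hp hq => rw [map_add, Polynomial.eval_add, hp, hq, map_add]
    | mul_X p i hp =>
      rw [map_mul, Polynomial.eval_mul, hp, map_mul, aeval_X, eval_X]
      simp [lineMap_apply, mul_comm]

theorem hasFDerivAt_mvPolynomial_eval {σ 𝕜 : Type*} [Fintype σ] [NontriviallyNormedField 𝕜]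
    (p : MvPolynomial σ 𝕜) (x : σ → 𝕜) :
    HasFDerivAt (fun y : σ → 𝕜 ↦ eval y p)
      (∑ i, eval x (pderiv i p) • ContinuousLinearMap.proj (R := 𝕜) (φ := fun _ : σ ↦ 𝕜) i) x := by
  classical
  induction p using MvPolynomial.induction_on with
  | C a =>
    simp only [eval_C]
    exact (hasFDerivAt_const a x).congr_fderiv (by ext v; simp)
  | add p q hp hq =>
    simp only [map_add]
    refine (hp.fun_add hq).congr_fderiv ?_
    ext v
    simp [add_mul, Finset.sum_add_distrib]
  | mul_X p j hp =>
    simp only [map_mul, eval_X]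
    refine (hp.fun_mul (hasFDerivAt_apply j x)).congr_fderiv ?_
    ext v
    simp [Derivation.leibniz, pderiv_X, Pi.single_apply, add_mul, Finset.sum_add_distrib,
      apply_ite (eval x), Finset.mul_sum, mul_assoc]

end Polynomials

section PlanarDet

/-- The determinant of a pair of plane vectors: the signed area of the parallelogram they span. -/
def planarDet (a b : ℝ × ℝ) : ℝ :=
  a.1 * b.2 - a.2 * b.1

theorem planarDet_swap (a b : ℝ × ℝ) : planarDet b a = -planarDet a b := by
  simp only [planarDet]
  ring

theorem planarDet_smul_smul (r s : ℝ) (a b : ℝ × ℝ) :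
    planarDet (r • a) (s • b) = r * s * planarDet a b := by
  simp only [planarDet, Prod.smul_fst, Prod.smul_snd, smul_eq_mul]
  ring

theorem det_coprod_toSpanSingleton (a b : ℝ × ℝ) :
    ((ContinuousLinearMap.toSpanSingleton ℝ a).coprod
      (ContinuousLinearMap.toSpanSingleton ℝ b)).det = planarDet a b := by
  have hmatrix : (ContinuousLinearMap.toSpanSingleton ℝ a).coprod
      (ContinuousLinearMap.toSpanSingleton ℝ b) =
      LinearMap.toContinuousLinearMap (Matrix.toLin (Module.Basis.finTwoProd ℝ)
        (Module.Basis.finTwoProd ℝ) !![a.1, b.1; a.2, b.2]) := by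
    rw [Matrix.toLin_finTwoProd_toContinuousLinearMap]
    ext <;> simp
  rw [hmatrix, LinearMap.det_toContinuousLinearMap, LinearMap.det_toLin, Matrix.det_fin_two_of,
    planarDet]
  ring

end PlanarDet

section Cone

open AffineMap Set

variable {E : Type*} [AddCommGroup E] [Module ℝ E] (V A B : E)

/-- Collapsed coordinates `(θ, u)` on the triangle `VAB`: `θ` moves along the edge `[A, B]` and
`u` runs from the vertex `V` to that edge. -/
def coneMap (z : ℝ × ℝ) : E :=
  lineMap V (lineMap A B z.1 : E) z.2

theorem convexHull_triple_eq_image_coneMap :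
    convexHull ℝ {V, A, B} = coneMap V A B '' (Icc 0 1 ×ˢ Icc 0 1) := by
  ext x
  simp only [convexHull_insert (insert_nonempty _ _), convexHull_pair, convexJoin_singleton_left,
    segment_eq_image_lineMap, mem_iUnion, mem_image, exists_prop, exists_exists_and_eq_and,
    Prod.exists, mem_prod, coneMap, and_assoc, exists_and_left]

theorem convexHull_triple_eq_insert :
    convexHull ℝ {V, A, B} = insert V (coneMap V A B '' (Icc 0 1 ×ˢ Ioc 0 1)) := by
  have hvertex (θ : ℝ) : coneMap V A B (θ, 0) = V := lineMap_apply_zero _ _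
  rw [convexHull_triple_eq_image_coneMap, ← Ioc_insert_left zero_le_one, prod_insert, image_union,
    image_image]
  simp only [hvertex, (insert_nonempty _ _).image_const, singleton_union]

theorem coneMap_sub_vertex (z : ℝ × ℝ) :
    coneMap V A B z - V = (z.2 * (1 - z.1)) • (A - V) + (z.2 * z.1) • (B - V) := by
  simp only [coneMap, lineMap_apply_module]
  module

theorem apply_coneMap_eq_one_sub {β : E →ᵃ[ℝ] ℝ} (hV : β V = 1) (hA : β A = 0) (hB : β B = 0)
    (z : ℝ × ℝ) : β (coneMap V A B z) = 1 - z.2 := by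
  rw [coneMap, apply_lineMap, apply_lineMap, hV, hA, hB, lineMap_same_apply, lineMap_apply_module']
  simp only [smul_eq_mul]
  ring

theorem injOn_coneMap {V A B : E} (h : LinearIndependent ℝ ![A - V, B - V]) :
    InjOn (coneMap V A B) {z | z.2 ≠ 0} := by
  rintro ⟨θ, u⟩ hu ⟨θ', u'⟩ - heq
  have hcomb : (u * (1 - θ)) • (A - V) + (u * θ) • (B - V) =
      (u' * (1 - θ')) • (A - V) + (u' * θ') • (B - V) := by
    rw [← coneMap_sub_vertex V A B (θ, u), ← coneMap_sub_vertex V A B (θ', u'), heq]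
  obtain ⟨hA, hB⟩ := h.eq_of_pair hcomb
  have hu' : u = u' := by linear_combination hA + hB
  subst hu'
  exact Prod.ext (mul_left_cancel₀ hu hB) rfl

theorem hasFDerivAt_coneMap {E : Type*} [NormedAddCommGroup E] [NormedSpace ℝ E] (V A B : E)
    (z : ℝ × ℝ) :
    HasFDerivAt (coneMap V A B)
      ((ContinuousLinearMap.toSpanSingleton ℝ (z.2 • (B - A))).coprod
        (ContinuousLinearMap.toSpanSingleton ℝ ((lineMap A B z.1 : E) - V))) z := by
  unfold coneMap
  simp only [lineMap_apply_module']
  have hedge : HasFDerivAt (fun z : ℝ × ℝ ↦ z.1 • (B - A) + A - V)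
      ((ContinuousLinearMap.fst ℝ ℝ ℝ).smulRight (B - A)) z :=
    ((hasFDerivAt_fst.smul_const (B - A)).add_const A).sub_const V
  refine ((hasFDerivAt_snd.fun_smul hedge).add_const V).congr_fderiv ?_
  ext <;> simp

theorem planarDet_smul_lineMap_sub (V A B : ℝ × ℝ) (z : ℝ × ℝ) :
    planarDet (z.2 • (B - A)) (lineMap A B z.1 - V) = -(z.2 * planarDet (A - V) (B - V)) := by
  simp only [planarDet, lineMap_apply_module, Prod.fst_add, Prod.fst_sub, Prod.smul_fst,
    Prod.snd_add, Prod.snd_sub, Prod.smul_snd, smul_eq_mul]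
  ring

theorem setIntegral_convexHull_triple {F : Type*} [NormedAddCommGroup F] [NormedSpace ℝ F]
    {V A B : ℝ × ℝ} (h : LinearIndependent ℝ ![A - V, B - V]) (f : ℝ × ℝ → F) :
    ∫ x in convexHull ℝ {V, A, B}, f x =
      ∫ z in Icc 0 1 ×ˢ Ioc 0 1, |z.2 * planarDet (A - V) (B - V)| • f (coneMap V A B z) := by
  have hpos : (Icc 0 1 ×ˢ Ioc 0 1 : Set (ℝ × ℝ)) ⊆ {z | z.2 ≠ 0} := fun z hz ↦ hz.2.1.ne'
  rw [convexHull_triple_eq_insert, setIntegral_congr_set (insert_ae_eq_self _ _),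
    integral_image_eq_integral_abs_det_fderiv_smul volume
      (measurableSet_Icc.prod measurableSet_Ioc)
      (fun z _ ↦ (hasFDerivAt_coneMap V A B z).hasFDerivWithinAt) ((injOn_coneMap h).mono hpos)]
  simp only [det_coprod_toSpanSingleton, planarDet_smul_lineMap_sub, abs_neg]

end Cone

section StingProfile

open AffineMap MvPolynomial Set

/-- The cubic `e` of the paper, whose composition with a barycentric coordinate is a sting
function. -/
noncomputable def stingProfile (t : ℝ) : ℝ :=
  (56 * t ^ 3 - 63 * t ^ 2 + 18 * t - 1) / 10

theorem continuous_stingProfile : Continuous stingProfile := by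
  unfold stingProfile
  fun_prop

theorem integral_stingProfile_one_sub_mul_pow (k : ℕ) :
    ∫ u in (0 : ℝ)..1, stingProfile (1 - u) * u ^ (k + 1) =
      (1 - k) * (2 - k) * (3 - k) / (10 * (k + 2) * (k + 3) * (k + 4) * (k + 5)) := by
  have hexpand (u : ℝ) : stingProfile (1 - u) * u ^ (k + 1) =
      u ^ (k + 1) - 6 * u ^ (k + 2) + 21 / 2 * u ^ (k + 3) - 28 / 5 * u ^ (k + 4) := by
    simp only [stingProfile]
    ring
  have hpow (m : ℕ) : IntervalIntegrable (fun u : ℝ ↦ u ^ m) volume 0 1 :=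
    intervalIntegral.intervalIntegrable_pow m
  have hint (m : ℕ) (c : ℝ) : IntervalIntegrable (fun u : ℝ ↦ c * u ^ m) volume 0 1 :=
    (hpow m).const_mul c
  simp_rw [hexpand]
  rw [intervalIntegral.integral_sub (((hpow _).sub (hint _ _)).add (hint _ _)) (hint _ _),
    intervalIntegral.integral_add ((hpow _).sub (hint _ _)) (hint _ _),
    intervalIntegral.integral_sub (hpow _) (hint _ _)]
  simp only [intervalIntegral.integral_const_mul, integral_pow]
  push_cast
  field_simp
  ring

theorem integral_mul_stingProfile_mul_eval {q : Polynomial ℝ} (hq : q.natDegree ≤ 3) :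
    ∫ u in (0 : ℝ)..1, u * (stingProfile (1 - u) * q.eval u) = q.eval 0 / 200 := by
  have hexpand (u : ℝ) : u * (stingProfile (1 - u) * q.eval u) =
      ∑ k ∈ Finset.range 4, q.coeff k * (stingProfile (1 - u) * u ^ (k + 1)) := by
    rw [Polynomial.eval_eq_sum_range' (Nat.lt_succ_of_le hq), Finset.mul_sum, Finset.mul_sum]
    exact Finset.sum_congr rfl fun k _ ↦ by ring
  have hcont (k : ℕ) : Continuous fun u ↦ q.coeff k * (stingProfile (1 - u) * u ^ (k + 1)) := by
    have := continuous_stingProfile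
    fun_prop
  simp_rw [hexpand]
  rw [intervalIntegral.integral_finsetSum fun k _ ↦ (hcont k).intervalIntegrable 0 1]
  simp only [intervalIntegral.integral_const_mul, integral_stingProfile_one_sub_mul_pow]
  norm_num [Finset.sum_range_succ, Polynomial.coeff_zero_eq_eval_zero]
  ring

theorem integral_mul_stingProfile_mul_eval_lineMap {σ : Type*} {P : MvPolynomial σ ℝ}
    (hP : P.totalDegree ≤ 3) (x y : σ → ℝ) :
    ∫ u in (0 : ℝ)..1, u * (stingProfile (1 - u) * eval (lineMap x y u) P) = eval x P / 200 := by
  obtain ⟨q, hq_deg, hq⟩ := exists_polynomial_eval_lineMap P x y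
  simp only [← hq, integral_mul_stingProfile_mul_eval (hq_deg.trans hP)]
  rw [hq, lineMap_apply_zero]

theorem setIntegral_stingProfile_mul_eval {V A B : ℝ × ℝ}
    (h : LinearIndependent ℝ ![A - V, B - V]) {β : (ℝ × ℝ) →ᵃ[ℝ] ℝ} (hV : β V = 1) (hA : β A = 0)
    (hB : β B = 0) {P : MvPolynomial (Fin 2) ℝ} (hP : P.totalDegree ≤ 3) :
    ∫ x in convexHull ℝ {V, A, B}, stingProfile (β x) * eval ![x.1, x.2] P =
      |planarDet (A - V) (B - V)| * (eval ![V.1, V.2] P / 200) := by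
  set D := planarDet (A - V) (B - V)
  let F (z : ℝ × ℝ) : ℝ := |z.2 * D| *
    (stingProfile (1 - z.2) * eval ![(coneMap V A B z).1, (coneMap V A B z).2] P)
  have hF : IntegrableOn F (Icc 0 1 ×ˢ Ioc 0 1) := by
    have hprofile := continuous_stingProfile
    have hcone : Continuous (coneMap V A B) :=
      continuous_iff_continuousAt.mpr fun z ↦ (hasFDerivAt_coneMap V A B z).continuousAt
    have hcoord : Continuous fun z ↦ ![(coneMap V A B z).1, (coneMap V A B z).2] :=
      (ContinuousLinearEquiv.finTwoArrow ℝ ℝ).symm.continuous.comp hcone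
    have heval := (MvPolynomial.continuous_eval P).comp hcoord
    have hcont : Continuous F := by fun_prop
    exact (hcont.continuousOn.integrableOn_compact (isCompact_Icc.prod isCompact_Icc)).mono_set
      (prod_mono_right Ioc_subset_Icc_self)
  have hray (θ : ℝ) : ∫ u in Ioc 0 1, F (θ, u) = |D| * (eval ![V.1, V.2] P / 200) := by
    set W : ℝ × ℝ := lineMap A B θ with hW
    have hcoord (u : ℝ) : ![(coneMap V A B (θ, u)).1, (coneMap V A B (θ, u)).2] =
        lineMap ![V.1, V.2] ![W.1, W.2] u := by
      ext i
      fin_cases i <;> simp [coneMap, ← hW, lineMap_apply_module]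
    rw [← integral_mul_stingProfile_mul_eval_lineMap hP _ ![W.1, W.2],
      intervalIntegral.integral_of_le zero_le_one, ← integral_const_mul]
    refine setIntegral_congr_fun measurableSet_Ioc fun u hu ↦ ?_
    simp only [F, hcoord, abs_mul, abs_of_pos hu.1]
    ring
  calc ∫ x in convexHull ℝ {V, A, B}, stingProfile (β x) * eval ![x.1, x.2] P
      = ∫ z in Icc 0 1 ×ˢ Ioc 0 1, F z := by
        simp only [setIntegral_convexHull_triple h, apply_coneMap_eq_one_sub V A B hV hA hB,
          smul_eq_mul, F, D]
    _ = ∫ θ in Icc (0 : ℝ) 1, ∫ u in Ioc 0 1, F (θ, u) := setIntegral_prod F hF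
    _ = |D| * (eval ![V.1, V.2] P / 200) := by simp [hray]

end StingProfile

section PolynomialFields

open MvPolynomial

/-- Plane vector fields whose two components are polynomials of total degree at most `n`. -/
def IsPolynomialField (n : ℕ) (v : ℝ × ℝ → ℝ × ℝ) : Prop :=
  ∃ p q : MvPolynomial (Fin 2) ℝ, p.totalDegree ≤ n ∧ q.totalDegree ≤ n ∧
    ∀ x, v x = (eval ![x.1, x.2] p, eval ![x.1, x.2] q)

theorem hasFDerivAt_planar_eval (p : MvPolynomial (Fin 2) ℝ) (x : ℝ × ℝ) :
    HasFDerivAt (fun y : ℝ × ℝ ↦ eval ![y.1, y.2] p)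
      (eval ![x.1, x.2] (pderiv 0 p) • ContinuousLinearMap.fst ℝ ℝ ℝ +
        eval ![x.1, x.2] (pderiv 1 p) • ContinuousLinearMap.snd ℝ ℝ ℝ) x := by
  refine ((hasFDerivAt_mvPolynomial_eval p ![x.1, x.2]).comp x
    (ContinuousLinearEquiv.finTwoArrow ℝ ℝ).symm.hasFDerivAt).congr_fderiv ?_
  ext <;> simp [Fin.sum_univ_two]

theorem IsPolynomialField.differentiable {n : ℕ} {v : ℝ × ℝ → ℝ × ℝ}
    (hv : IsPolynomialField n v) : Differentiable ℝ v := by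
  obtain ⟨p, q, -, -, hpq⟩ := hv
  rw [funext hpq]
  exact fun x ↦ (hasFDerivAt_planar_eval p x).differentiableAt.prodMk
    (hasFDerivAt_planar_eval q x).differentiableAt

theorem IsPolynomialField.exists_pdiv_eq_eval {n : ℕ} {v : ℝ × ℝ → ℝ × ℝ}
    (hv : IsPolynomialField n v) :
    ∃ P : MvPolynomial (Fin 2) ℝ, P.totalDegree ≤ n - 1 ∧ ∀ x, pdiv v x = eval ![x.1, x.2] P := by
  obtain ⟨p, q, hp, hq, hpq⟩ := hv
  refine ⟨pderiv 0 p + pderiv 1 q, ?_, fun x ↦ ?_⟩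
  · exact (totalDegree_add _ _).trans (max_le
      ((totalDegree_pderiv_le 0 p).trans (Nat.sub_le_sub_right hp 1))
      ((totalDegree_pderiv_le 1 q).trans (Nat.sub_le_sub_right hq 1)))
  · simp [pdiv, hpq, (hasFDerivAt_planar_eval _ x).fderiv]

theorem IsPolynomialField.setIntegral_sting_mul_pdiv {v : ℝ × ℝ → ℝ × ℝ}
    (hv : IsPolynomialField 4 v) {V a b : ℝ × ℝ} (hab : LinearIndependent ℝ ![a, b]) {r s : ℝ}
    (hr : r ≠ 0) (hs : s ≠ 0) {β : (ℝ × ℝ) →ᵃ[ℝ] ℝ}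
    (hβ : β V = 1 ∧ β (V + r • a) = 0 ∧ β (V + s • b) = 0) {φ : ℝ × ℝ → ℝ}
    (hφ : ∀ x, φ x = stingProfile (β x)) :
    ∫ x in convexHull ℝ {V, V + r • a, V + s • b}, φ x * pdiv v x =
      |r * s| * (|planarDet a b| / 200 * pdiv v V) := by
  obtain ⟨P, hP, hdiv⟩ := hv.exists_pdiv_eq_eval
  have hedges : LinearIndependent ℝ ![V + r • a - V, V + s • b - V] := by
    simpa using (LinearIndependent.pair_smul_smul_iff hr.isUnit hs.isUnit).mpr hab
  simp only [hφ, hdiv, setIntegral_stingProfile_mul_eval hedges hβ.1 hβ.2.1 hβ.2.2 hP,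
    add_sub_cancel_left, planarDet_smul_smul, abs_mul]
  ring

end PolynomialFields

section AlternatingSum

open AffineMap Set

theorem fderiv_apply_eq_of_eqOn_segment {E F : Type*} [NormedAddCommGroup E] [NormedSpace ℝ E]
    [NormedAddCommGroup F] [NormedSpace ℝ F] {f g : E → F} {x d : E} {r : ℝ}
    (hf : DifferentiableAt ℝ f x) (hg : DifferentiableAt ℝ g x) (hr : r ≠ 0)
    (hfg : EqOn f g (segment ℝ x (x + r • d))) : fderiv ℝ f x d = fderiv ℝ g x d := by
  have hderiv {k : E → F} (hk : DifferentiableAt ℝ k x) :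
      HasDerivWithinAt (k ∘ (lineMap x (x + r • d) : ℝ → E)) (r • fderiv ℝ k x d) (Icc 0 1) 0 := by
    have hk' : HasFDerivAt k (fderiv ℝ k x) (lineMap x (x + r • d) (0 : ℝ)) := by
      simpa using hk.hasFDerivAt
    simpa using (hk'.comp_hasDerivAt (0 : ℝ) hasDerivAt_lineMap).hasDerivWithinAt
  have heq : EqOn (f ∘ (lineMap x (x + r • d) : ℝ → E)) (g ∘ lineMap x (x + r • d)) (Icc 0 1) :=
    fun t ht ↦ hfg (segment_eq_image_lineMap ℝ x (x + r • d) ▸ mem_image_of_mem _ ht)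
  have hzero : (0 : ℝ) ∈ Icc (0 : ℝ) 1 := left_mem_Icc.mpr zero_le_one
  exact smul_right_injective F hr <| (uniqueDiffOn_Icc zero_lt_one 0 hzero).eq_deriv _
    (hderiv hf) ((hderiv hg).congr heq (heq hzero))

theorem alternating_sum_eq_zero_of_span_pair_eq_top {R M N : Type*} [Ring R] [AddCommGroup M]
    [Module R M] [AddCommGroup N] [Module R N] {f₁ f₂ f₃ f₄ : M →ₗ[R] N} {a b : M}
    (hspan : Submodule.span R {a, b} = ⊤) (h₁₂ : f₁ b = f₂ b) (h₂₃ : f₂ a = f₃ a)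
    (h₃₄ : f₃ b = f₄ b) (h₄₁ : f₄ a = f₁ a) : f₁ - f₂ + f₃ - f₄ = 0 := by
  refine LinearMap.ext_on hspan ?_
  rintro x (rfl | rfl)
  · simp [h₂₃, h₄₁]
  · simp [h₁₂, h₃₄]

theorem pdiv_eq_fderiv {v : ℝ × ℝ → ℝ × ℝ} {x : ℝ × ℝ} (hv : DifferentiableAt ℝ v x) :
    pdiv v x = (fderiv ℝ v x (1, 0)).1 + (fderiv ℝ v x (0, 1)).2 := by
  rw [pdiv, fderiv.fst hv, fderiv.snd hv]
  rfl

theorem alternating_sum_pdiv_eq_zero {v₁ v₂ v₃ v₄ : ℝ × ℝ → ℝ × ℝ} {V a b : ℝ × ℝ}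
    (hab : LinearIndependent ℝ ![a, b]) {r₁ r₂ r₃ r₄ : ℝ}
    (hr₁ : r₁ ≠ 0) (hr₂ : r₂ ≠ 0) (hr₃ : r₃ ≠ 0) (hr₄ : r₄ ≠ 0)
    (hv₁ : DifferentiableAt ℝ v₁ V) (hv₂ : DifferentiableAt ℝ v₂ V)
    (hv₃ : DifferentiableAt ℝ v₃ V) (hv₄ : DifferentiableAt ℝ v₄ V)
    (h₁₂ : EqOn v₁ v₂ (segment ℝ V (V + r₂ • b))) (h₂₃ : EqOn v₂ v₃ (segment ℝ V (V + r₃ • a)))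
    (h₃₄ : EqOn v₃ v₄ (segment ℝ V (V + r₄ • b))) (h₄₁ : EqOn v₄ v₁ (segment ℝ V (V + r₁ • a))) :
    pdiv v₁ V - pdiv v₂ V + pdiv v₃ V - pdiv v₄ V = 0 := by
  have hspan : Submodule.span ℝ {a, b} = ⊤ := by
    simpa [Matrix.range_cons, pair_comm] using hab.span_eq_top_of_card_eq_finrank (by simp)
  have hsum := alternating_sum_eq_zero_of_span_pair_eq_top
    (f₁ := (fderiv ℝ v₁ V).toLinearMap) (f₂ := (fderiv ℝ v₂ V).toLinearMap)
    (f₃ := (fderiv ℝ v₃ V).toLinearMap) (f₄ := (fderiv ℝ v₄ V).toLinearMap) hspan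
    (fderiv_apply_eq_of_eqOn_segment hv₁ hv₂ hr₂ h₁₂)
    (fderiv_apply_eq_of_eqOn_segment hv₂ hv₃ hr₃ h₂₃)
    (fderiv_apply_eq_of_eqOn_segment hv₃ hv₄ hr₄ h₃₄)
    (fderiv_apply_eq_of_eqOn_segment hv₄ hv₁ hr₁ h₄₁)
  have hx := congrArg Prod.fst (LinearMap.congr_fun hsum (1, 0))
  have hy := congrArg Prod.snd (LinearMap.congr_fun hsum (0, 1))
  simp only [LinearMap.sub_apply, LinearMap.add_apply, LinearMap.zero_apply,
    ContinuousLinearMap.coe_coe, Prod.fst_sub, Prod.fst_add, Prod.snd_sub, Prod.snd_add,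
    Prod.fst_zero, Prod.snd_zero] at hx hy
  simp only [pdiv_eq_fderiv, hv₁, hv₂, hv₃, hv₄]
  linear_combination hx + hy

end AlternatingSum

/-- Equation (5.2) of subsection 5.3: at an interior exactly singular vertex `V`,
surrounded by the four triangles `Kᵢ = convexHull {V, Vᵢ, Vᵢ₊₁}`, the alternating
combination of sting functions is orthogonal to the divergence of every continuous
piecewise-quartic vector field. -/
theorem alternating_sting_sum_is_spurious (V τ₁ τ₂ : ℝ × ℝ)
    (hτ₁ : τ₁.1 ^ 2 + τ₁.2 ^ 2 = 1) (hτ₂ : τ₂.1 ^ 2 + τ₂.2 ^ 2 = 1)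
    (hindep : LinearIndependent ℝ ![τ₁, τ₂])
    (ℓ₁ ℓ₂ ℓ₃ ℓ₄ : ℝ) (hℓ₁ : 0 < ℓ₁) (hℓ₂ : 0 < ℓ₂) (hℓ₃ : 0 < ℓ₃) (hℓ₄ : 0 < ℓ₄)
    (V₁ V₂ V₃ V₄ : ℝ × ℝ)
    (hV₁ : V₁ = V + ℓ₁ • τ₁) (hV₂ : V₂ = V + ℓ₂ • τ₂)
    (hV₃ : V₃ = V - ℓ₃ • τ₁) (hV₄ : V₄ = V - ℓ₄ • τ₂)
    (β₁ β₂ β₃ β₄ : (ℝ × ℝ) →ᵃ[ℝ] ℝ)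
    (hβ₁ : β₁ V = 1 ∧ β₁ V₁ = 0 ∧ β₁ V₂ = 0)
    (hβ₂ : β₂ V = 1 ∧ β₂ V₂ = 0 ∧ β₂ V₃ = 0)
    (hβ₃ : β₃ V = 1 ∧ β₃ V₃ = 0 ∧ β₃ V₄ = 0)
    (hβ₄ : β₄ V = 1 ∧ β₄ V₄ = 0 ∧ β₄ V₁ = 0)
    (s₁ s₂ s₃ s₄ : ℝ × ℝ → ℝ)
    (hs₁ : ∀ x, s₁ x = (56 * (β₁ x) ^ 3 - 63 * (β₁ x) ^ 2 + 18 * (β₁ x) - 1) / 10)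
    (hs₂ : ∀ x, s₂ x = (56 * (β₂ x) ^ 3 - 63 * (β₂ x) ^ 2 + 18 * (β₂ x) - 1) / 10)
    (hs₃ : ∀ x, s₃ x = (56 * (β₃ x) ^ 3 - 63 * (β₃ x) ^ 2 + 18 * (β₃ x) - 1) / 10)
    (hs₄ : ∀ x, s₄ x = (56 * (β₄ x) ^ 3 - 63 * (β₄ x) ^ 2 + 18 * (β₄ x) - 1) / 10)
    (p₁ q₁ p₂ q₂ p₃ q₃ p₄ q₄ : MvPolynomial (Fin 2) ℝ)
    (hp₁ : p₁.totalDegree ≤ 4) (hq₁ : q₁.totalDegree ≤ 4)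
    (hp₂ : p₂.totalDegree ≤ 4) (hq₂ : q₂.totalDegree ≤ 4)
    (hp₃ : p₃.totalDegree ≤ 4) (hq₃ : q₃.totalDegree ≤ 4)
    (hp₄ : p₄.totalDegree ≤ 4) (hq₄ : q₄.totalDegree ≤ 4)
    (v₁ v₂ v₃ v₄ : ℝ × ℝ → ℝ × ℝ)
    (hv₁ : ∀ x, v₁ x = (MvPolynomial.eval ![x.1, x.2] p₁, MvPolynomial.eval ![x.1, x.2] q₁))
    (hv₂ : ∀ x, v₂ x = (MvPolynomial.eval ![x.1, x.2] p₂, MvPolynomial.eval ![x.1, x.2] q₂))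
    (hv₃ : ∀ x, v₃ x = (MvPolynomial.eval ![x.1, x.2] p₃, MvPolynomial.eval ![x.1, x.2] q₃))
    (hv₄ : ∀ x, v₄ x = (MvPolynomial.eval ![x.1, x.2] p₄, MvPolynomial.eval ![x.1, x.2] q₄))
    (hagree₁ : ∀ x ∈ segment ℝ V V₂, v₁ x = v₂ x)
    (hagree₂ : ∀ x ∈ segment ℝ V V₃, v₂ x = v₃ x)
    (hagree₃ : ∀ x ∈ segment ℝ V V₄, v₃ x = v₄ x)
    (hagree₄ : ∀ x ∈ segment ℝ V V₁, v₄ x = v₁ x) :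
    (1 / (ℓ₁ * ℓ₂)) * (∫ x in convexHull ℝ {V, V₁, V₂}, s₁ x * pdiv v₁ x) -
      (1 / (ℓ₂ * ℓ₃)) * (∫ x in convexHull ℝ {V, V₂, V₃}, s₂ x * pdiv v₂ x) +
      (1 / (ℓ₃ * ℓ₄)) * (∫ x in convexHull ℝ {V, V₃, V₄}, s₃ x * pdiv v₃ x) -
      (1 / (ℓ₄ * ℓ₁)) * (∫ x in convexHull ℝ {V, V₄, V₁}, s₄ x * pdiv v₄ x) = 0 := by
  have hf₁ : IsPolynomialField 4 v₁ := ⟨p₁, q₁, hp₁, hq₁, hv₁⟩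
  have hf₂ : IsPolynomialField 4 v₂ := ⟨p₂, q₂, hp₂, hq₂, hv₂⟩
  have hf₃ : IsPolynomialField 4 v₃ := ⟨p₃, q₃, hp₃, hq₃, hv₃⟩
  have hf₄ : IsPolynomialField 4 v₄ := ⟨p₄, q₄, hp₄, hq₄, hv₄⟩
  have hℓ₃' : -ℓ₃ ≠ 0 := neg_ne_zero.mpr hℓ₃.ne'
  have hℓ₄' : -ℓ₄ ≠ 0 := neg_ne_zero.mpr hℓ₄.ne'
  have hindep' := LinearIndependent.pair_symm_iff.mp hindep
  rw [sub_eq_add_neg, ← neg_smul] at hV₃ hV₄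
  subst hV₁ hV₂ hV₃ hV₄
  have hdiv : pdiv v₁ V - pdiv v₂ V + pdiv v₃ V - pdiv v₄ V = 0 :=
    alternating_sum_pdiv_eq_zero hindep hℓ₁.ne' hℓ₂.ne' hℓ₃' hℓ₄' (hf₁.differentiable V)
      (hf₂.differentiable V) (hf₃.differentiable V) (hf₄.differentiable V)
      hagree₁ hagree₂ hagree₃ hagree₄
  rw [hf₁.setIntegral_sting_mul_pdiv hindep hℓ₁.ne' hℓ₂.ne' hβ₁ hs₁,
    hf₂.setIntegral_sting_mul_pdiv hindep' hℓ₂.ne' hℓ₃' hβ₂ hs₂,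
    hf₃.setIntegral_sting_mul_pdiv hindep hℓ₃' hℓ₄' hβ₃ hs₃,
    hf₄.setIntegral_sting_mul_pdiv hindep' hℓ₄' hℓ₁.ne' hβ₄ hs₄]
  simp only [abs_mul, abs_neg, abs_of_pos hℓ₁, abs_of_pos hℓ₂, abs_of_pos hℓ₃, abs_of_pos hℓ₄,
    planarDet_swap τ₁ τ₂]
  field_simp
  linear_combination |planarDet τ₁ τ₂| * hdiv
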